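/- arXiv:2404.19223 — 9 statements merged into one kernel-verified Lean document; each statement's English description precedes it below -/
import Mathlib

section
/- Closedness of the set of admissible disturbance bounds: if f : (Fin n → ℝ) → (Fin n → ℝ) is continuous and S is a closed subset of the space of trajectories Fin N → (Fin n → ℝ) (with its product topology), then for every state x the set {ε : ℝ | 0 ≤ ε ∧ ξ(x,ε) ⊆ S} is a closed subset of ℝ. -/
open Classical Set Filter

noncomputable section

/-- The set of perturbed trajectories of length `N` of the system
`x(k+1) = f (x k) + d k` with `‖d k‖_∞ ≤ ε`, starting at `x`.
The norm on `Fin n → ℝ` is the sup norm. -/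
def xi {n : ℕ} (N : ℕ) [NeZero N] (f : (Fin n → ℝ) → (Fin n → ℝ))
    (x : Fin n → ℝ) (ε : ℝ) : Set (Fin N → (Fin n → ℝ)) :=
  {w | w 0 = x ∧ ∀ k : Fin N, ∀ h : (k : ℕ) + 1 < N,
    ‖w ⟨(k : ℕ) + 1, h⟩ - f (w k)‖ ≤ ε}

/-- The resilience of the system w.r.t. the specification (trajectory set) `S`
and initial state `x`. -/
def gres {n N : ℕ} [NeZero N] (f : (Fin n → ℝ) → (Fin n → ℝ))
    (S : Set (Fin N → (Fin n → ℝ))) (x : Fin n → ℝ) : ENNReal :=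
  if xi N f x 0 ⊆ S then
    sSup {e : ENNReal | ∃ ε : ℝ, 0 ≤ ε ∧ e = ENNReal.ofReal ε ∧ xi N f x ε ⊆ S}
  else 0

/-- The trajectory of `x(k+1) = f (x k) + d k` starting at `x`. -/
def disturbedOrbit {E : Type*} [Add E] (f : E → E) (x : E) (d : ℕ → E) : ℕ → E
  | 0 => x
  | k + 1 => f (disturbedOrbit f x d k) + d k

theorem continuous_disturbedOrbit {E T : Type*} [TopologicalSpace E] [Add E] [ContinuousAdd E]
    [TopologicalSpace T] {f : E → E} (hf : Continuous f) (x : E) {d : T → ℕ → E}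
    (hd : ∀ k, Continuous fun t => d t k) (k : ℕ) :
    Continuous fun t => disturbedOrbit f x (d t) k := by
  induction k with
  | zero => exact continuous_const
  | succ k ih => exact (hf.comp ih).add (hd k)

theorem disturbedOrbit_mem_xi {n N : ℕ} [NeZero N] (f : (Fin n → ℝ) → (Fin n → ℝ))
    (x : Fin n → ℝ) {d : ℕ → Fin n → ℝ} {ε : ℝ} (hd : ∀ k, ‖d k‖ ≤ ε) :
    (fun k : Fin N => disturbedOrbit f x d k) ∈ xi N f x ε :=
  ⟨by simp [disturbedOrbit], fun k _ => by simpa [disturbedOrbit] using hd k⟩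

/-- Every perturbed trajectory is generated by a disturbance sequence within the bound. -/
theorem exists_disturbedOrbit_eq_of_mem_xi {n N : ℕ} [NeZero N]
    {f : (Fin n → ℝ) → (Fin n → ℝ)} {x : Fin n → ℝ} {ε : ℝ} (hε : 0 ≤ ε)
    {w : Fin N → Fin n → ℝ} (hw : w ∈ xi N f x ε) :
    ∃ d : ℕ → Fin n → ℝ, (∀ k, ‖d k‖ ≤ ε) ∧ (fun k : Fin N => disturbedOrbit f x d k) = w := by
  let d : ℕ → Fin n → ℝ := fun k =>
    if h : k + 1 < N then w ⟨k + 1, h⟩ - f (w ⟨k, by omega⟩) else 0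
  refine ⟨d, fun k => ?_, ?_⟩
  · by_cases h : k + 1 < N
    · simpa [d, h] using hw.2 ⟨k, by omega⟩ h
    · simpa [d, h] using hε
  · have key : ∀ k (hk : k < N), disturbedOrbit f x d k = w ⟨k, hk⟩ := by
      intro k
      induction k with
      | zero => exact fun _ => hw.1.symm
      | succ k ih => intro hk; simp [disturbedOrbit, ih (by omega), d, hk]
    exact funext fun k => key k k.2

/-- Closedness of the set of admissible disturbance bounds: for continuous `f`
and a closed specification `S`, the set `{ε | 0 ≤ ε ∧ ξ(x,ε) ⊆ S}` is closed. -/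
theorem isClosed_admissible {n N : ℕ} (hn : 1 ≤ n) [NeZero N]
    (f : (Fin n → ℝ) → (Fin n → ℝ)) (hf : Continuous f)
    (S : Set (Fin N → (Fin n → ℝ))) (hS : IsClosed S) (x : Fin n → ℝ) :
    IsClosed {ε : ℝ | 0 ≤ ε ∧ xi N f x ε ⊆ S} := by
  refine isClosed_of_closure_subset fun ε hε => ?_
  have hε0 : 0 ≤ ε := closure_minimal (fun _ h => h.1) isClosed_Ici hε
  refine ⟨hε0, fun w hw => ?_⟩
  obtain ⟨d, hd, rfl⟩ := exists_disturbedOrbit_eq_of_mem_xi hε0 hw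
  -- Rescale the disturbance from the bound `ε` to the bound `δ`.
  let g : ℝ → Fin N → Fin n → ℝ := fun δ k => disturbedOrbit f x (fun j => (δ / ε) • d j) k
  have hg : Continuous g := continuous_pi fun k =>
    continuous_disturbedOrbit hf x (fun _ => by fun_prop) k
  have hmaps : MapsTo g {δ : ℝ | 0 ≤ δ ∧ xi N f x δ ⊆ S} S := fun δ hδ =>
    hδ.2 <| disturbedOrbit_mem_xi f x fun k => by
      rw [norm_smul, Real.norm_of_nonneg (div_nonneg hδ.1 hε0)]
      calc δ / ε * ‖d k‖ ≤ δ / ε * ε :=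
            mul_le_mul_of_nonneg_left (hd k) (div_nonneg hδ.1 hε0)
        _ ≤ δ := by
            rcases hε0.eq_or_lt with rfl | hpos
            · simpa using hδ.1
            · rw [div_mul_cancel₀ _ hpos.ne']
  have hgε : g ε = fun k : Fin N => disturbedOrbit f x d k := by
    have : (fun j => (ε / ε) • d j) = d := funext fun j => by
      rcases hε0.eq_or_lt with rfl | hpos
      · simp [norm_le_zero_iff.mp (hd j)]
      · simp [hpos.ne']
    simp only [g, this]
  exact hgε ▸ hS.closure_subset (map_mem_closure hg hε hmaps)

end
end

section
/- Attainment of the supremum for closed specifications: if f : (Fin n → ℝ) → (Fin n → ℝ) is continuous, S is a closed subset of the space of trajectories, x is a state, and the set Adm := {ε : ℝ | 0 ≤ ε ∧ ξ(x,ε) ⊆ S} is nonempty and bounded above, then its supremum is attained: ξ(x, sSup Adm) ⊆ S, i.e. sSup Adm ∈ Adm. -/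
open Classical Set Filter

noncomputable section

/-- The trajectory from `x` of the system driven by the disturbance `d` scaled by `t`. -/
def scaledTrajectory {E : Type*} [AddCommGroup E] [Module ℝ E] (f : E → E) (x : E) (d : ℕ → E)
    (t : ℝ) : ℕ → E
  | 0 => x
  | k + 1 => f (scaledTrajectory f x d t k) + t • d k

theorem continuous_scaledTrajectory {E : Type*} [NormedAddCommGroup E] [NormedSpace ℝ E]
    {f : E → E} (hf : Continuous f) (x : E) (d : ℕ → E) (k : ℕ) :
    Continuous fun t => scaledTrajectory f x d t k := by
  induction k with
  | zero => exact continuous_const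
  | succ k ih => exact (hf.comp ih).add (continuous_id.smul continuous_const)

theorem xi_mono {n N : ℕ} [NeZero N] (f : (Fin n → ℝ) → (Fin n → ℝ)) (x : Fin n → ℝ) :
    Monotone (xi N f x) :=
  fun _ _ hε _ hw => ⟨hw.1, fun k h => (hw.2 k h).trans hε⟩

/-- A perturbed trajectory is the value at `1` of a continuous path whose value at `t ≥ 0` has its
disturbances scaled by `t`. -/
theorem exists_continuous_path_mem_xi {n N : ℕ} [NeZero N] {f : (Fin n → ℝ) → (Fin n → ℝ)}
    (hf : Continuous f) {x : Fin n → ℝ} {ε : ℝ} {w : Fin N → (Fin n → ℝ)}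
    (hw : w ∈ xi N f x ε) :
    ∃ γ : ℝ → Fin N → (Fin n → ℝ), Continuous γ ∧ γ 1 = w ∧
      ∀ t, 0 ≤ t → γ t ∈ xi N f x (t * ε) := by
  obtain ⟨hw0, hw⟩ := hw
  let d : ℕ → (Fin n → ℝ) := fun k =>
    if h : k + 1 < N then w ⟨k + 1, h⟩ - f (w ⟨k, by omega⟩) else 0
  refine ⟨fun t k => scaledTrajectory f x d t k,
    continuous_pi fun k => continuous_scaledTrajectory hf x d k, ?_, fun t ht => ⟨?_, ?_⟩⟩
  · have key : ∀ k (h : k < N), scaledTrajectory f x d 1 k = w ⟨k, h⟩ := by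
      intro k
      induction k with
      | zero => exact fun _ => hw0.symm
      | succ k ih =>
        intro h
        simp [scaledTrajectory, ih (by omega), d, h]
    exact funext fun k => key k k.2
  · simp [scaledTrajectory]
  · intro k h
    have := hw k h
    simp only [scaledTrajectory, add_sub_cancel_left, norm_smul, Real.norm_of_nonneg ht, d,
      dif_pos h]
    exact mul_le_mul_of_nonneg_left this ht

/-- Attainment of the supremum for closed specifications: if `f` is continuous,
`S` is closed, and the set of admissible disturbance bounds is nonempty and
bounded above, then its supremum is itself admissible. -/
theorem sSup_mem_admissible {n N : ℕ} (hn : 1 ≤ n) [NeZero N]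
    (f : (Fin n → ℝ) → (Fin n → ℝ)) (hf : Continuous f)
    (S : Set (Fin N → (Fin n → ℝ))) (hS : IsClosed S) (x : Fin n → ℝ)
    (hne : {ε : ℝ | 0 ≤ ε ∧ xi N f x ε ⊆ S}.Nonempty)
    (hbdd : BddAbove {ε : ℝ | 0 ≤ ε ∧ xi N f x ε ⊆ S}) :
    sSup {ε : ℝ | 0 ≤ ε ∧ xi N f x ε ⊆ S} ∈ {ε : ℝ | 0 ≤ ε ∧ xi N f x ε ⊆ S} := by
  set A := {ε : ℝ | 0 ≤ ε ∧ xi N f x ε ⊆ S}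
  have hs : 0 ≤ sSup A := Real.sSup_nonneg fun ε hε => hε.1
  refine ⟨hs, fun w hw => ?_⟩
  obtain ⟨γ, hγ, rfl, hmem⟩ := exists_continuous_path_mem_xi hf hw
  have hlt : ∀ t ∈ Ico (0 : ℝ) 1, γ t ∈ S := by
    rintro t ⟨ht0, ht1⟩
    obtain ⟨ε, hε, hle⟩ : ∃ ε ∈ A, t * sSup A ≤ ε := by
      rcases hs.eq_or_lt with h0 | hpos
      · obtain ⟨ε, hε⟩ := hne
        exact ⟨ε, hε, by simpa [← h0] using hε.1⟩
      · obtain ⟨ε, hε, h⟩ := exists_lt_of_lt_csSup hne (mul_lt_of_lt_one_left hpos ht1)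
        exact ⟨ε, hε, h.le⟩
    exact hε.2 (xi_mono f x hle (hmem t ht0))
  have hclosed : closure (Ico (0 : ℝ) 1) ⊆ γ ⁻¹' S :=
    closure_minimal hlt (hS.preimage hγ)
  rw [closure_Ico zero_ne_one] at hclosed
  exact hclosed (right_mem_Icc.2 zero_le_one)

end
end

section
/- Boundedness of the resilience: assume the horizon satisfies N ≥ 2 and there is a bounded set B ⊆ (Fin n → ℝ) such that every trajectory w ∈ S satisfies w k ∈ B for all k ∈ Fin N. Then for every map f and every state x, the set {ε : ℝ | 0 ≤ ε ∧ ξ(x,ε) ⊆ S} is bounded above (hence the resilience of x with respect to S is finite). -/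
open Classical Set Filter

noncomputable section

/-- The trajectory driven by a constant disturbance `c` with `‖c‖ ≤ ε` is a perturbed trajectory. -/
theorem iterate_add_const_mem_xi {n N : ℕ} [NeZero N] (f : (Fin n → ℝ) → (Fin n → ℝ))
    (x c : Fin n → ℝ) {ε : ℝ} (hc : ‖c‖ ≤ ε) :
    (fun k : Fin N => (fun y => f y + c)^[(k : ℕ)] x) ∈ xi N f x ε := by
  refine ⟨by simp, fun k h => ?_⟩
  simpa [Function.iterate_succ_apply'] using hc

/-- Boundedness of the resilience: if `N ≥ 2` and every trajectory of `S` stays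
in a bounded set `B`, then the set of admissible disturbance bounds is bounded
above (hence the resilience is finite). -/
theorem bddAbove_admissible {n N : ℕ} (hn : 1 ≤ n) [NeZero N] (hN : 2 ≤ N)
    (B : Set (Fin n → ℝ)) (hB : Bornology.IsBounded B)
    (S : Set (Fin N → (Fin n → ℝ))) (hSB : ∀ w ∈ S, ∀ k : Fin N, w k ∈ B)
    (f : (Fin n → ℝ) → (Fin n → ℝ)) (x : Fin n → ℝ) :
    BddAbove {ε : ℝ | 0 ≤ ε ∧ xi N f x ε ⊆ S} := by
  obtain ⟨R, hR⟩ := hB.exists_norm_le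
  refine ⟨R + ‖f x‖, fun ε hε => ?_⟩
  obtain ⟨hε0, hS⟩ := hε
  have : Nonempty (Fin n) := ⟨⟨0, hn⟩⟩
  let c : Fin n → ℝ := fun _ => ε
  have hc : ‖c‖ = ε := by rw [pi_norm_const, Real.norm_of_nonneg hε0]
  have hfc : ‖f x + c‖ ≤ R := hR _ (hSB _ (hS (iterate_add_const_mem_xi f x c hc.le)) ⟨1, hN⟩)
  calc ε = ‖(f x + c) - f x‖ := by rw [add_sub_cancel_left, hc]
    _ ≤ ‖f x + c‖ + ‖f x‖ := norm_sub_le _ _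
    _ ≤ R + ‖f x‖ := by gcongr

end
end

section
/- Theorem 3.8 (resilience over a convex hull for linear systems and convex specifications): let the dynamics be linear, f(z) = A.mulVec z for a matrix A : Matrix (Fin n) (Fin n) ℝ, let S be a convex subset of the real vector space of trajectories Fin N → (Fin n → ℝ), let p ≥ 1 and c : Fin p → (Fin n → ℝ) be finitely many points. Then the infimum of the resilience over the convex hull equals the minimum over the generating points: ⨅ x ∈ convexHull ℝ (Set.range c), g_S(x) = ⨅ i : Fin p, g_S(c i). -/
open Classical Set Filter

noncomputable section

theorem ofReal_le_gres {n N : ℕ} [NeZero N] {f : (Fin n → ℝ) → (Fin n → ℝ)}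
    {S : Set (Fin N → (Fin n → ℝ))} {x : Fin n → ℝ} {ε : ℝ} (hε : 0 ≤ ε)
    (h : xi N f x ε ⊆ S) : ENNReal.ofReal ε ≤ gres f S x := by
  rw [gres, if_pos ((xi_mono f x hε).trans h)]
  exact le_sSup ⟨ε, hε, rfl, h⟩

theorem xi_subset_of_ofReal_lt_gres {n N : ℕ} [NeZero N] {f : (Fin n → ℝ) → (Fin n → ℝ)}
    {S : Set (Fin N → (Fin n → ℝ))} {x : Fin n → ℝ} {ε : ℝ}
    (h : ENNReal.ofReal ε < gres f S x) : xi N f x ε ⊆ S := by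
  unfold gres at h
  split_ifs at h
  · obtain ⟨_, ⟨δ, -, rfl, hδ⟩, hlt⟩ := lt_sSup_iff.1 h
    exact (xi_mono f x (ENNReal.ofReal_lt_ofReal_iff'.1 hlt).1.le).trans hδ
  · exact absurd h not_lt_zero

/-- Adding an unperturbed trajectory of a linear system translates the initial state and keeps
the size of the perturbations. -/
theorem add_pow_mulVec_mem_xi {n N : ℕ} [NeZero N] {A : Matrix (Fin n) (Fin n) ℝ}
    {x : Fin n → ℝ} {ε : ℝ} {w : Fin N → (Fin n → ℝ)}
    (hw : w ∈ xi N (fun z => A.mulVec z) x ε) (v : Fin n → ℝ) :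
    (fun k => w k + (A ^ (k : ℕ)).mulVec v) ∈ xi N (fun z => A.mulVec z) (x + v) ε := by
  refine ⟨by simp [hw.1], fun k hk => ?_⟩
  convert hw.2 k hk using 2
  simp [Matrix.mulVec_add, pow_succ']

theorem xi_subset_of_mem_convexHull {n N : ℕ} [NeZero N] {A : Matrix (Fin n) (Fin n) ℝ}
    {S : Set (Fin N → (Fin n → ℝ))} (hS : Convex ℝ S) {C : Set (Fin n → ℝ)} {ε : ℝ}
    (hC : ∀ y ∈ C, xi N (fun z => A.mulVec z) y ε ⊆ S) {x : Fin n → ℝ}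
    (hx : x ∈ convexHull ℝ C) : xi N (fun z => A.mulVec z) x ε ⊆ S := by
  intro w hw
  let T : (Fin n → ℝ) → (Fin N → (Fin n → ℝ)) :=
    fun y k => w k + (A ^ (k : ℕ)).mulVec (y - x)
  have hconv : Convex ℝ (T ⁻¹' S) := by
    intro y hy z hz a b ha hb hab
    have hT : T (a • y + b • z) = a • T y + b • T z := by
      obtain rfl : b = 1 - a := by linarith
      ext k i
      simp only [T, Pi.add_apply, Pi.smul_apply, smul_eq_mul, Matrix.mulVec_sub,
        Matrix.mulVec_add, Matrix.mulVec_smul, Pi.sub_apply]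
      ring
    rw [Set.mem_preimage, hT]
    exact hS hy hz ha hb hab
  have hsub : C ⊆ T ⁻¹' S := fun y hy =>
    hC y hy (by simpa using add_pow_mulVec_mem_xi hw (y - x))
  simpa [T] using convexHull_min hsub hconv hx

/-- Theorem 3.8: for linear dynamics and a convex specification, the infimum of
the resilience over the convex hull of finitely many points equals the minimum
of the resiliences at these points. -/
theorem gres_convexHull {n N : ℕ} (hn : 1 ≤ n) [NeZero N]
    (A : Matrix (Fin n) (Fin n) ℝ)
    (S : Set (Fin N → (Fin n → ℝ))) (hS : Convex ℝ S)
    (p : ℕ) (hp : 1 ≤ p) (c : Fin p → (Fin n → ℝ)) :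
    ⨅ x ∈ convexHull ℝ (Set.range c), gres (fun z => A.mulVec z) S x
      = ⨅ i : Fin p, gres (fun z => A.mulVec z) S (c i) := by
  apply le_antisymm
  · exact le_iInf fun i => iInf₂_le (c i) (subset_convexHull ℝ _ (mem_range_self i))
  · refine le_iInf₂ fun x hx => le_of_forall_lt_imp_le_of_dense fun b hb => ?_
    have hb_top := ENNReal.ofReal_toReal hb.ne_top
    rw [← hb_top] at hb ⊢
    refine ofReal_le_gres ENNReal.toReal_nonneg (xi_subset_of_mem_convexHull hS ?_ hx)
    rintro _ ⟨i, rfl⟩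
    exact xi_subset_of_ofReal_lt_gres (hb.trans_le (iInf_le _ i))

end
end

section
/- Convex-hull containment of perturbed trajectory sets for linear systems (key step of Theorem 3.8): let f(z) = A.mulVec z for A : Matrix (Fin n) (Fin n) ℝ, let p ≥ 1, c : Fin p → (Fin n → ℝ), and let α : Fin p → ℝ satisfy α i ≥ 0 for all i and ∑ i, α i = 1. Then for x = ∑ i, α i • c i and every ε ≥ 0, ξ(x,ε) ⊆ convexHull ℝ (⋃ i, ξ(c i, ε)). -/
open Classical Set Filter

noncomputable section

/-- Convex-hull containment of perturbed trajectory sets for linear systems: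
if `x` is a convex combination of the points `c i`, then every `ε`-perturbed
trajectory from `x` lies in the convex hull of the `ε`-perturbed trajectories
from the points `c i`. -/
theorem xi_subset_convexHull {n N : ℕ} (hn : 1 ≤ n) [NeZero N]
    (A : Matrix (Fin n) (Fin n) ℝ)
    (p : ℕ) (hp : 1 ≤ p) (c : Fin p → (Fin n → ℝ)) (α : Fin p → ℝ)
    (hα : ∀ i, 0 ≤ α i) (hsum : ∑ i, α i = 1) (ε : ℝ) (hε : 0 ≤ ε) :
    xi N (fun z => A.mulVec z) (∑ i, α i • c i) ε ⊆
      convexHull ℝ (⋃ i : Fin p, xi N (fun z => A.mulVec z) (c i) ε) := by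
  intro w hw
  set x := ∑ i, α i • c i with hx
  have hmem : ∀ i, (fun k : Fin N => w k + (A ^ (k : ℕ)).mulVec (c i - x)) ∈
      xi N (fun z => A.mulVec z) (c i) ε := fun i => by
    simpa using add_pow_mulVec_mem_xi hw (c i - x)
  have hzero : ∑ i, α i • (c i - x) = 0 := by
    simp [smul_sub, Finset.sum_sub_distrib, ← Finset.sum_smul, hsum, ← hx]
  have hw_eq : w = ∑ i, α i • fun k : Fin N => w k + (A ^ (k : ℕ)).mulVec (c i - x) := by
    funext k
    simp only [Finset.sum_apply, Pi.smul_apply, smul_add, Finset.sum_add_distrib,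
      ← Finset.sum_smul, hsum, one_smul, ← Matrix.mulVec_smul, ← Matrix.mulVec_sum, hzero,
      Matrix.mulVec_zero, add_zero]
  rw [hw_eq]
  exact (convex_convexHull ℝ _).sum_mem (fun i _ => hα i) hsum
    fun i _ => subset_convexHull ℝ _ (mem_iUnion.2 ⟨i, hmem i⟩)

end
end

section
/- Affine Farkas lemma in matrix form (Appendix Theorem): let A : Matrix (Fin m) (Fin n) ℝ, b : Fin m → ℝ, E : Matrix (Fin q) (Fin n) ℝ, F : Fin q → ℝ, and suppose there exists x with A.mulVec x ≤ b componentwise. Then the following are equivalent: (1) for every x : Fin n → ℝ, A.mulVec x ≤ b implies E.mulVec x ≤ F (both componentwise); (2) there exists a matrix P : Matrix (Fin q) (Fin m) ℝ with all entries nonnegative such that P * A = E and P.mulVec b ≤ F componentwise. -/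
/-- **Farkas' lemma** for finitely many linear functionals over an ordered field. -/
theorem exists_nonneg_eq_sum_smul_of_forall_nonpos {K V : Type*} [Field K] [LinearOrder K]
    [IsStrictOrderedRing K] [AddCommGroup V] [Module K V] {m : ℕ} (a : Fin m → V →ₗ[K] K)
    (c : V →ₗ[K] K) (h : ∀ x, (∀ i, a i x ≤ 0) → c x ≤ 0) :
    ∃ l : Fin m → K, (∀ i, 0 ≤ l i) ∧ c = ∑ i, l i • a i := by
  induction m generalizing c with
  | zero =>
    refine ⟨0, fun i => i.elim0, LinearMap.ext fun x => ?_⟩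
    have h₁ := h x fun i => i.elim0
    have h₂ := h (-x) fun i => i.elim0
    rw [map_neg] at h₂
    simpa using le_antisymm h₁ (by linarith)
  | succ m ih =>
    by_cases hc : ∀ x, (∀ i : Fin m, a i.succ x ≤ 0) → c x ≤ 0
    · obtain ⟨l, hl, rfl⟩ := ih (fun i => a i.succ) c hc
      exact ⟨Fin.cons 0 l, Fin.cases (by simp) (by simpa using hl), by simp [Fin.sum_univ_succ]⟩
    · push Not at hc
      obtain ⟨x₀, hx₀, hcx₀⟩ := hc
      have ha : 0 < a 0 x₀ := by
        by_contra! hle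
        exact absurd (h x₀ (Fin.cases hle hx₀)) (not_le.2 hcx₀)
      -- Restrict to the kernel of `a 0` through the projection along `x₀`.
      obtain ⟨l, hl, hsum⟩ := ih (fun i => a i.succ - (a i.succ x₀ / a 0 x₀) • a 0)
        (c - (c x₀ / a 0 x₀) • a 0) fun x hx => by
          have hproj : ∀ f : V →ₗ[K] K,
              (f - (f x₀ / a 0 x₀) • a 0) x = f (x - (a 0 x / a 0 x₀) • x₀) := fun f => by
            simp only [LinearMap.sub_apply, LinearMap.smul_apply, map_sub, map_smul, smul_eq_mul]
            ring
          rw [hproj]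
          refine h _ (Fin.cases ?_ fun i => ?_)
          · simp [ha.ne']
          · rw [← hproj]
            exact hx i
      refine ⟨Fin.cons (c x₀ / a 0 x₀ - ∑ i, l i * (a i.succ x₀ / a 0 x₀)) l,
        Fin.cases ?_ (by simpa using hl), ?_⟩
      · ext x
        have hx := LinearMap.congr_fun hsum x
        simp only [LinearMap.sub_apply, LinearMap.sum_apply, LinearMap.smul_apply, smul_eq_mul,
          mul_sub, Finset.sum_sub_distrib, ← mul_assoc, ← Finset.sum_mul] at hx
        simp only [Fin.sum_univ_succ, LinearMap.add_apply, LinearMap.sum_apply,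
          LinearMap.smul_apply, smul_eq_mul, Fin.cons_zero, Fin.cons_succ]
        linear_combination hx
      · have : ∑ i, l i * (a i.succ x₀ / a 0 x₀) ≤ 0 := Finset.sum_nonpos fun i _ =>
          mul_nonpos_of_nonneg_of_nonpos (hl i) (div_nonpos_of_nonpos_of_nonneg (hx₀ i) ha.le)
        have := div_pos hcx₀ ha
        rw [Fin.cons_zero]
        linarith

/-- **Affine Farkas lemma** for finitely many linear functionals over an ordered field. -/
theorem exists_nonneg_eq_sum_smul_of_forall_le {K V : Type*} [Field K] [LinearOrder K]
    [IsStrictOrderedRing K] [AddCommGroup V] [Module K V] {m : ℕ} (a : Fin m → V →ₗ[K] K)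
    (b : Fin m → K) (e : V →ₗ[K] K) (f : K) (hfeas : ∃ x, ∀ i, a i x ≤ b i)
    (h : ∀ x, (∀ i, a i x ≤ b i) → e x ≤ f) :
    ∃ l : Fin m → K, (∀ i, 0 ≤ l i) ∧ e = ∑ i, l i • a i ∧ ∑ i, l i * b i ≤ f := by
  obtain ⟨x₀, hx₀⟩ := hfeas
  -- Homogenize: the functionals `(x, t) ↦ a i x - b i * t` and `(x, t) ↦ -t` on `V × K`.
  let φ : (V →ₗ[K] K) → K → (V × K →ₗ[K] K) := fun g s => g.coprod (-s • LinearMap.id)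
  have hφ : ∀ g s x t, φ g s (x, t) = g x - s * t := fun g s x t => by
    simp [φ, sub_eq_add_neg]
  obtain ⟨l, hl, hsum⟩ := exists_nonneg_eq_sum_smul_of_forall_nonpos
    (Fin.cons (φ 0 1) fun i => φ (a i) (b i) : Fin (m + 1) → (V × K →ₗ[K] K)) (φ e f) (by
      rintro ⟨x, t⟩ hx
      have ht : 0 ≤ t := by simpa [hφ] using hx 0
      have hax : ∀ i, a i x ≤ b i * t := fun i => by simpa [hφ] using hx i.succ
      rw [hφ, sub_nonpos]
      rcases ht.eq_or_lt with rfl | ht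
      · by_contra! hex
        rw [mul_zero] at hex
        have hray := h (x₀ + ((f - e x₀ + 1) / e x) • x) fun i => by
          have hs : 0 ≤ (f - e x₀ + 1) / e x :=
            div_nonneg (by linarith [h x₀ hx₀]) hex.le
          have := mul_nonpos_of_nonneg_of_nonpos hs (by simpa using hax i)
          simp only [map_add, map_smul, smul_eq_mul]
          linarith [hx₀ i]
        rw [map_add, map_smul, smul_eq_mul, div_mul_cancel₀ _ hex.ne'] at hray
        linarith
      · have hscale := h (t⁻¹ • x) fun i => by
          rw [map_smul, smul_eq_mul, inv_mul_le_iff₀ ht, mul_comm]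
          exact hax i
        rwa [map_smul, smul_eq_mul, inv_mul_le_iff₀ ht, mul_comm] at hscale)
  have heval : ∀ x t, e x - f * t = -(l 0 * t) + ∑ i : Fin m, l i.succ * (a i x - b i * t) :=
    fun x t => by
      have := LinearMap.congr_fun hsum (x, t)
      simpa [Fin.sum_univ_succ, hφ] using this
  refine ⟨fun i => l i.succ, fun i => hl _, LinearMap.ext fun x => ?_, ?_⟩
  · simpa using heval x 0
  · have := heval 0 1
    simp only [map_zero, mul_one, zero_sub, mul_neg, Finset.sum_neg_distrib] at this
    linarith [hl 0]

/-- Affine form of Farkas' lemma in matrix form: if `{x | A x ≤ b}` is nonempty,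
then `A x ≤ b → E x ≤ F` for all `x` iff there is an entrywise nonnegative
matrix `P` with `P A = E` and `P b ≤ F`. -/
theorem farkas_affine_matrix {m n q : ℕ}
    (A : Matrix (Fin m) (Fin n) ℝ) (b : Fin m → ℝ)
    (E : Matrix (Fin q) (Fin n) ℝ) (F : Fin q → ℝ)
    (hfeas : ∃ x : Fin n → ℝ, A.mulVec x ≤ b) :
    (∀ x : Fin n → ℝ, A.mulVec x ≤ b → E.mulVec x ≤ F) ↔
      ∃ P : Matrix (Fin q) (Fin m) ℝ,
        (∀ i j, 0 ≤ P i j) ∧ P * A = E ∧ P.mulVec b ≤ F := by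
  constructor
  · intro h
    have hrow : ∀ k, ∃ l : Fin m → ℝ, (∀ i, 0 ≤ l i) ∧
        LinearMap.proj k ∘ₗ E.mulVecLin = ∑ i, l i • (LinearMap.proj i ∘ₗ A.mulVecLin) ∧
        ∑ i, l i * b i ≤ F k := fun k =>
      exists_nonneg_eq_sum_smul_of_forall_le (fun i => LinearMap.proj i ∘ₗ A.mulVecLin) b _ _
        hfeas fun x hx => h x hx k
    choose P hP hPA hPb using hrow
    refine ⟨Matrix.of P, hP, ?_, hPb⟩
    ext k j
    have := LinearMap.congr_fun (hPA k) (Pi.single j 1)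
    simpa [Matrix.mul_apply] using this.symm
  · rintro ⟨P, hP, rfl, hPb⟩ x hx
    rw [← Matrix.mulVec_mulVec]
    exact le_trans (fun k => dotProduct_le_dotProduct_of_nonneg_left hx (hP k)) hPb
end

section
/- Theorem 4.1 (exact-time reachability for linear systems, Farkas characterization): fix A : Matrix (Fin n) (Fin n) ℝ, a polytope Γ given by G : Matrix (Fin q) (Fin n) ℝ and H : Fin q → ℝ, a horizon N ≥ 1, a state x : Fin n → ℝ, and a real ε > 0. Let E : Matrix (Fin q) (Fin N × Fin n) ℝ be the block matrix whose column block indexed by k ∈ Fin N is G * A^(N-1-k); let A_b : Matrix ((Fin N × Fin n) ⊕ (Fin N × Fin n)) (Fin N × Fin n) ℝ be the vertical stack of the identity matrix and its negation, and let B_b be the all-ones vector on (Fin N × Fin n) ⊕ (Fin N × Fin n). Then the following are equivalent: (1) for every disturbance sequence d : Fin N → (Fin n → ℝ) with ‖d k‖_∞ ≤ ε for all k, one has G.mulVec ((A^N).mulVec x + ∑ k : Fin N, (A^(N-1-k)).mulVec (d k)) ≤ H componentwise; (2) there exists a matrix P : Matrix (Fin q) ((Fin N × Fin n) ⊕ (Fin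 N × Fin n)) ℝ with all entries nonnegative such that P * A_b = E and P.mulVec B_b ≤ ε⁻¹ • (H - G.mulVec ((A^N).mulVec x)) componentwise. -/
/-- The support function of the sup-norm ball of radius `ε` is `ε` times the `ℓ¹` norm. -/
theorem forall_abs_le_sum_mul_le_iff {ι : Type*} [Fintype ι] (a : ι → ℝ) (b : ℝ) {ε : ℝ}
    (hε : 0 ≤ ε) :
    (∀ d : ι → ℝ, (∀ j, |d j| ≤ ε) → ∑ j, a j * d j ≤ b) ↔ ε * ∑ j, |a j| ≤ b := by
  constructor
  · intro h
    refine le_trans (le_of_eq ?_) (h (fun j => if 0 ≤ a j then ε else -ε) fun j => ?_)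
    · rw [Finset.mul_sum]
      refine Finset.sum_congr rfl fun j _ => ?_
      split_ifs with hj
      · rw [abs_of_nonneg hj, mul_comm]
      · rw [abs_of_neg (not_le.mp hj)]
        ring
    · split_ifs <;> simp [abs_of_nonneg hε]
  · intro h d hd
    refine le_trans ?_ h
    rw [Finset.mul_sum]
    refine Finset.sum_le_sum fun j _ => ?_
    calc a j * d j ≤ |a j| * |d j| := (le_abs_self _).trans (abs_mul _ _).le
      _ ≤ |a j| * ε := mul_le_mul_of_nonneg_left (hd j) (abs_nonneg _)
      _ = ε * |a j| := mul_comm _ _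

/-- Nonnegative multipliers for the unit box `{y | [1; -1] y ≤ 1}` exist exactly when the
`ℓ¹` norms of the rows satisfy the bound. -/
theorem exists_nonneg_mul_fromRows_one_neg_one_iff {m ι : Type*} [Fintype ι] [DecidableEq ι]
    (M : Matrix m ι ℝ) (c : m → ℝ) :
    (∃ P : Matrix m (ι ⊕ ι) ℝ, (∀ i j, 0 ≤ P i j) ∧
        P * Matrix.fromRows (1 : Matrix ι ι ℝ) (-1 : Matrix ι ι ℝ) = M ∧
        P.mulVec (fun _ => 1) ≤ c) ↔
      ∀ i, ∑ j, |M i j| ≤ c i := by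
  have mul_apply (P : Matrix m (ι ⊕ ι) ℝ) (i : m) (j : ι) :
      (P * Matrix.fromRows (1 : Matrix ι ι ℝ) (-1 : Matrix ι ι ℝ)) i j =
        P i (.inl j) - P i (.inr j) := by
    simp [Matrix.mul_apply, Matrix.one_apply, sub_eq_add_neg]
  have mulVec_apply (P : Matrix m (ι ⊕ ι) ℝ) (i : m) :
      P.mulVec (fun _ => 1) i = ∑ j, (P i (.inl j) + P i (.inr j)) := by
    simp [Matrix.mulVec, dotProduct, Finset.sum_add_distrib]
  constructor
  · rintro ⟨P, hP, rfl, hc⟩ i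
    refine le_trans ?_ (hc i)
    rw [mulVec_apply]
    refine Finset.sum_le_sum fun j _ => ?_
    rw [mul_apply, abs_le]
    constructor <;> linarith [hP i (.inl j), hP i (.inr j)]
  · intro h
    refine ⟨Matrix.fromCols (Matrix.of fun i j => (M i j)⁺) (Matrix.of fun i j => (M i j)⁻),
      ?_, ?_, fun i => ?_⟩
    · rintro i (j | j) <;> simp [posPart_nonneg, negPart_nonneg]
    · ext i j
      rw [mul_apply]
      simp [posPart_sub_negPart]
    · rw [mulVec_apply]
      simpa [posPart_add_negPart] using h i

/-- The image under `G` of a sum of transformed vectors, written with the block matrix whose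
column blocks are `G * B k`. -/
theorem mulVec_add_sum_mulVec_apply {m κ ι : Type*} [Fintype κ] [Fintype ι]
    (G : Matrix m ι ℝ) (B : κ → Matrix ι ι ℝ) (y : ι → ℝ) (d : κ → ι → ℝ) (i : m) :
    G.mulVec (y + ∑ k, (B k).mulVec (d k)) i =
      G.mulVec y i + ∑ kj : κ × ι, (G * B kj.1) i kj.2 * d kj.1 kj.2 := by
  rw [Matrix.mulVec_add, Matrix.mulVec_sum, Pi.add_apply, Finset.sum_apply,
    Fintype.sum_prod_type]
  simp only [Matrix.mulVec_mulVec]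
  rfl

/-- Theorem 4.1 (exact-time reachability for linear systems, Farkas
characterization). Condition (1): every disturbance sequence of sup-norm at
most `ε` keeps the state at time `N` in the polytope `{y | G y ≤ H}`.
Condition (2): existence of a nonnegative Farkas multiplier matrix `P` with
`P * A_b = E` and `P B_b ≤ ε⁻¹ (H - G A^N x)`, where `A_b` stacks the identity
and its negation, `B_b` is the all-ones vector, and the column block `k` of `E`
is `G * A^(N-1-k)`. -/
theorem exact_time_reachability_farkas {n q N : ℕ} (hN : 1 ≤ N)
    (A : Matrix (Fin n) (Fin n) ℝ)
    (G : Matrix (Fin q) (Fin n) ℝ) (H : Fin q → ℝ)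
    (x : Fin n → ℝ) (ε : ℝ) (hε : 0 < ε) :
    (∀ d : Fin N → (Fin n → ℝ), (∀ k, ‖d k‖ ≤ ε) →
        G.mulVec ((A ^ N).mulVec x
          + ∑ k : Fin N, (A ^ (N - 1 - (k : ℕ))).mulVec (d k)) ≤ H) ↔
      ∃ P : Matrix (Fin q) ((Fin N × Fin n) ⊕ (Fin N × Fin n)) ℝ,
        (∀ i j, 0 ≤ P i j) ∧
        P * Matrix.fromRows (1 : Matrix (Fin N × Fin n) (Fin N × Fin n) ℝ) (-1)
          = Matrix.of (fun i kj => (G * A ^ (N - 1 - (kj.1 : ℕ))) i kj.2) ∧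
        P.mulVec (fun _ => 1) ≤ ε⁻¹ • (H - G.mulVec ((A ^ N).mulVec x)) := by
  refine Iff.trans ?_ (exists_nonneg_mul_fromRows_one_neg_one_iff _ _).symm
  have key (i : Fin q) := forall_abs_le_sum_mul_le_iff
    (fun kj : Fin N × Fin n => (G * A ^ (N - 1 - (kj.1 : ℕ))) i kj.2)
    (H i - G.mulVec ((A ^ N).mulVec x) i) hε.le
  simp only [Matrix.of_apply, Pi.smul_apply, Pi.sub_apply, smul_eq_mul,
    le_inv_mul_iff₀ hε, ← key, Pi.le_def, mulVec_add_sum_mulVec_apply, ← le_sub_iff_add_le',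
    pi_norm_le_iff_of_nonneg hε.le, Real.norm_eq_abs]
  exact ⟨fun h i d hd => h (fun k j => d (k, j)) (fun k j => hd (k, j)) i,
    fun h d hd i => h i (fun kj => d kj.1 kj.2) fun kj => hd kj.1 kj.2⟩
end

section
/- Theorem 4.3 (finite-horizon safety for linear systems, Farkas characterization): fix A : Matrix (Fin n) (Fin n) ℝ, a polytope Γ given by G : Matrix (Fin q) (Fin n) ℝ and H : Fin q → ℝ, a horizon N ≥ 1, a state x : Fin n → ℝ, and a real ε > 0. Let E : Matrix (Fin N × Fin q) (Fin N × Fin n) ℝ be the lower block-triangular matrix whose block in row block i ∈ Fin N and column block k ∈ Fin N equals G * A^(i-k) if k ≤ i and the zero matrix otherwise; let F : Fin N × Fin q → ℝ be the stacked vector whose block i equals H - G.mulVec ((A^(i+1)).mulVec x); let A_b : Matrix ((Fin N × Fin n) ⊕ (Fin N × Fin n)) (Fin N × Fin n) ℝ be the vertical stack of the identity matrix and its negation, and let B_b be the all-ones vector. Then the following are equivalent: (1) for every disturbance sequence d : Fin N → (Fin n → ℝ) with ‖d k‖_∞ ≤ ε for all k, and for every i ∈ Fin N, one has G.mulVec ((A^(i+1)).mulVec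 x + ∑ k ≤ i, (A^(i-k)).mulVec (d k)) ≤ H componentwise; (2) there exists a matrix P : Matrix (Fin N × Fin q) ((Fin N × Fin n) ⊕ (Fin N × Fin n)) ℝ with all entries nonnegative such that P * A_b = E and P.mulVec B_b ≤ ε⁻¹ • F componentwise. -/
open Matrix in
/-- Affine Farkas lemma for the box `{v | ∀ j, |v j| ≤ ε}`. -/
theorem forall_box_mulVec_le_iff {m ι : Type*} [Fintype ι] [DecidableEq ι]
    (E : Matrix m ι ℝ) (F : m → ℝ) {ε : ℝ} (hε : 0 < ε) :
    (∀ v : ι → ℝ, (∀ j, |v j| ≤ ε) → E *ᵥ v ≤ F) ↔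
      ∃ P : Matrix m (ι ⊕ ι) ℝ, (∀ i j, 0 ≤ P i j) ∧
        P * fromRows (1 : Matrix ι ι ℝ) (-1) = E ∧
        P *ᵥ (fun _ => 1) ≤ ε⁻¹ • F := by
  constructor
  · intro h
    refine ⟨fromCols (of fun i j => (E i j)⁺) (of fun i j => (E i j)⁻), ?_, ?_, ?_⟩
    · rintro i (j | j)
      · exact posPart_nonneg _
      · exact negPart_nonneg _
    · refine (fromCols_mul_fromRows _ _ _ _).trans ?_
      ext i j
      simp [← sub_eq_add_neg]
    · intro i
      have hv := h (fun j => ε * SignType.sign (E i j)) (fun j => by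
        rw [abs_mul, abs_of_pos hε]
        refine mul_le_of_le_one_right hε.le ?_
        cases SignType.sign (E i j) <;> simp) i
      have hsum : (E *ᵥ fun j => ε * (SignType.sign (E i j) : ℝ)) i = ε * ∑ j, |E i j| := by
        simp only [mulVec, dotProduct, Finset.mul_sum]
        refine Finset.sum_congr rfl fun j _ => ?_
        rw [mul_left_comm, self_mul_sign]
      rw [hsum] at hv
      have hP : (fromCols (of fun i j => (E i j)⁺) (of fun i j => (E i j)⁻) *ᵥ
          fun _ => (1 : ℝ)) i = ∑ j, |E i j| := by
        simp [mulVec, dotProduct, ← Finset.sum_add_distrib, posPart_add_negPart]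
      rw [hP, Pi.smul_apply, smul_eq_mul]
      exact (le_inv_mul_iff₀ hε).2 hv
  · rintro ⟨P, hP, rfl, hF⟩ v hv i
    have hFi := hF i
    rw [Pi.smul_apply, smul_eq_mul, le_inv_mul_iff₀ hε] at hFi
    refine le_trans ?_ hFi
    refine (congrFun (mulVec_mulVec v P (fromRows 1 (-1))) i).symm.trans_le ?_
    rw [fromRows_mulVec]
    simp only [mulVec, dotProduct, Finset.mul_sum]
    refine Finset.sum_le_sum fun j _ => ?_
    rw [mul_one, mul_comm ε]
    refine mul_le_mul_of_nonneg_left ?_ (hP i j)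
    rcases j with j | j
    · simpa using (abs_le.1 (hv j)).2
    · simpa [neg_mulVec] using neg_le.1 (abs_le.1 (hv j)).1

open Matrix in
/-- The block lower-triangular matrix with blocks `G * A ^ (i - k)` computes the disturbance
contribution to the outputs of a linear system. -/
theorem blockLowerTriangular_mulVec_apply {n q N : ℕ} (A : Matrix (Fin n) (Fin n) ℝ)
    (G : Matrix (Fin q) (Fin n) ℝ) (v : Fin N × Fin n → ℝ) (i : Fin N) (r : Fin q) :
    ((of fun (ir : Fin N × Fin q) (kj : Fin N × Fin n) =>
        if (kj.1 : ℕ) ≤ (ir.1 : ℕ) then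
          (G * A ^ ((ir.1 : ℕ) - (kj.1 : ℕ))) ir.2 kj.2
        else 0) *ᵥ v) (i, r) =
      (G *ᵥ ∑ k ∈ Finset.Iic i, (A ^ ((i : ℕ) - (k : ℕ))) *ᵥ fun j => v (k, j)) r := by
  have hIic : Finset.Iic i = Finset.univ.filter fun k : Fin N => (k : ℕ) ≤ (i : ℕ) := by
    ext k
    simp
  rw [mulVec_sum, Finset.sum_apply, hIic, Finset.sum_filter]
  simp only [mulVec_mulVec]
  simp only [mulVec, dotProduct, of_apply, Fintype.sum_prod_type]
  refine Finset.sum_congr rfl fun k _ => ?_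
  split_ifs <;> simp

/-- Theorem 4.3 (finite-horizon safety for linear systems, Farkas
characterization). Condition (1): every disturbance sequence of sup-norm at
most `ε` keeps the state in the polytope `{y | G y ≤ H}` at all times
`1, …, N`. Condition (2): existence of a nonnegative Farkas multiplier matrix
`P` with `P * A_b = E` and `P B_b ≤ ε⁻¹ F`, where `A_b` stacks the identity and
its negation, `B_b` is the all-ones vector, `E` is the lower block-triangular
matrix with block `(i,k)` equal to `G * A^(i-k)` for `k ≤ i` (zero otherwise),
and block `i` of `F` is `H - G A^(i+1) x`. -/
theorem finite_horizon_safety_farkas {n q N : ℕ} (hN : 1 ≤ N)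
    (A : Matrix (Fin n) (Fin n) ℝ)
    (G : Matrix (Fin q) (Fin n) ℝ) (H : Fin q → ℝ)
    (x : Fin n → ℝ) (ε : ℝ) (hε : 0 < ε) :
    (∀ d : Fin N → (Fin n → ℝ), (∀ k, ‖d k‖ ≤ ε) → ∀ i : Fin N,
        G.mulVec ((A ^ ((i : ℕ) + 1)).mulVec x
          + ∑ k ∈ Finset.Iic i, (A ^ ((i : ℕ) - (k : ℕ))).mulVec (d k)) ≤ H) ↔
      ∃ P : Matrix (Fin N × Fin q) ((Fin N × Fin n) ⊕ (Fin N × Fin n)) ℝ,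
        (∀ i j, 0 ≤ P i j) ∧
        P * Matrix.fromRows (1 : Matrix (Fin N × Fin n) (Fin N × Fin n) ℝ) (-1)
          = Matrix.of (fun ir kj =>
              if (kj.1 : ℕ) ≤ (ir.1 : ℕ) then
                (G * A ^ ((ir.1 : ℕ) - (kj.1 : ℕ))) ir.2 kj.2
              else 0) ∧
        P.mulVec (fun _ => 1) ≤ ε⁻¹ •
          (fun ir : Fin N × Fin q =>
            (H - G.mulVec ((A ^ ((ir.1 : ℕ) + 1)).mulVec x)) ir.2) := by
  rw [← forall_box_mulVec_le_iff _ _ hε]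
  constructor
  · rintro h v hv ⟨i, r⟩
    have hi := h (fun k j => v (k, j))
      (fun k => (pi_norm_le_iff_of_nonneg hε.le).2 fun j => hv (k, j)) i r
    rw [Matrix.mulVec_add, Pi.add_apply] at hi
    rw [blockLowerTriangular_mulVec_apply]
    exact le_sub_iff_add_le'.2 hi
  · intro h d hd i r
    have hi := h (fun kj => d kj.1 kj.2) (fun kj => (norm_le_pi_norm (d kj.1) kj.2).trans (hd kj.1))
      (i, r)
    rw [blockLowerTriangular_mulVec_apply] at hi
    rw [Matrix.mulVec_add, Pi.add_apply]
    exact le_sub_iff_add_le'.1 hi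
end

section
/- Proposition 3.3(vi) (resilience of a set of initial states): for any map f, any set S of trajectories, and any set of initial states K ⊆ (Fin n → ℝ), define the set resilience g_S(K) ∈ ℝ≥0∞ as sSup {(ε : ℝ≥0∞) | ε is a nonnegative real with ξ(x,ε) ⊆ S for every x ∈ K} when ξ(x,0) ⊆ S for every x ∈ K, and g_S(K) = 0 otherwise. Then g_S(K) = ⨅ x ∈ K, g_S(x). -/
open Classical Set Filter

noncomputable section

/-- The resilience of a set `K` of initial states: the supremum of the
disturbance levels `ε ≥ 0` under which every trajectory started in `K`
satisfies the specification (when the nominal trajectories do), `0` otherwise. -/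
def gresSet {n N : ℕ} [NeZero N] (f : (Fin n → ℝ) → (Fin n → ℝ))
    (S : Set (Fin N → (Fin n → ℝ))) (K : Set (Fin n → ℝ)) : ENNReal :=
  if ∀ x ∈ K, xi N f x 0 ⊆ S then
    sSup {e : ENNReal | ∃ ε : ℝ, 0 ≤ ε ∧ e = ENNReal.ofReal ε ∧
      ∀ x ∈ K, xi N f x ε ⊆ S}
  else 0

/-- Proposition 3.3(vi): the resilience of a set of initial states is the
infimum of the resiliences of its points. -/
theorem gresSet_eq_iInf {n N : ℕ} (hn : 1 ≤ n) [NeZero N]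
    (f : (Fin n → ℝ) → (Fin n → ℝ)) (S : Set (Fin N → (Fin n → ℝ)))
    (K : Set (Fin n → ℝ)) :
    gresSet f S K = ⨅ x ∈ K, gres f S x := by
  unfold gresSet
  split_ifs with h0
  · apply le_antisymm
    · refine sSup_le ?_
      rintro _ ⟨ε, hε, rfl, hS⟩
      refine le_iInf₂ fun x hx => ?_
      rw [gres, if_pos (h0 x hx)]
      exact le_sSup ⟨ε, hε, rfl, hS x hx⟩
    · refine le_of_forall_lt fun c hc => ?_
      obtain ⟨d, hcd, hd⟩ := exists_between hc
      refine hcd.trans_le (le_sSup ⟨d.toReal, ENNReal.toReal_nonneg,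
        (ENNReal.ofReal_toReal hd.ne_top).symm, fun x hx => ?_⟩)
      have hdx : d < gres f S x := hd.trans_le (iInf₂_le x hx)
      rw [gres, if_pos (h0 x hx)] at hdx
      obtain ⟨_, ⟨ε, hε, rfl, hS⟩, hdε⟩ := lt_sSup_iff.1 hdx
      exact (xi_mono f x (ENNReal.toReal_le_of_le_ofReal hε hdε.le)).trans hS
  · push Not at h0
    obtain ⟨x, hx, hxS⟩ := h0
    refine (le_antisymm ((iInf₂_le x hx).trans ?_) zero_le).symm
    rw [gres, if_neg hxS]

end
end
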